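/- Let c > 0 and let a : (−c²/2, c²/3) → (0, c) be differentiable with ∫₀^{a(ξ)} (ξ + (c² − a(ξ)²)/2 − s²)·√((a(ξ)² − s²)/(c² − s²)) ds = 0 for every ξ in the interval, and set m(ξ) = a(ξ)/c. Define B(ξ) = 24·∫_{a(ξ)}^{c} (ξ + (c² − a(ξ)²)/2 − s²)·√((s² − a(ξ)²)/(c² − s²)) ds and Γ(ξ) = −(1/2)·(∫_{−a(ξ)}^{a(ξ)} ((c² − s²)(a(ξ)² − s²))^{−1/2} ds)^{−1}. Then for every ξ ∈ (−c²/2, c²/3), (Γ(ξ)/(6π)) · B′(ξ) = −c² / (2 K(m(ξ))²), where K(m) = ∫₀¹ ((1 − t²)(1 − m²t²))^{−1/2} dt. -/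

import Mathlib

/-!
Write `w = a ^ 2`. The substitutions `s = a * sin θ` and `s ^ 2 = c ^ 2 * cos θ ^ 2 + w * sin θ ^ 2`
express the normalization condition and the phase through complete elliptic integrals at the
complementary moduli `q = c ^ 2 - w` and `q = w`. For `J = E - q K` one has `∂J/∂q = -K / 2` and
`∂K/∂q = -J / (2 q (c ^ 2 - q))`. With these, differentiating the normalization condition gives
`J(c ^ 2 - w) + κ K(c ^ 2 - w) = 0`, where `κ = (ξ + c ^ 2 / 2 - 3 w / 2) * w' / 2`, and
differentiating the phase gives `B' / 24 = J(w) - κ K(w)` with the same `κ`. Eliminating `κ` leaves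
`J(w) K(c ^ 2 - w) + J(c ^ 2 - w) K(w)`, which is `π / 2` by Legendre's relation; the latter holds
because this expression has derivative zero in `w` and tends to `π / 2` as `w → 0`.
-/

section EllipticIntegrals

open Real Set Filter Topology

/-- The quadratic form under the root in the complete elliptic integrals, in Gauss's homogeneous
normalization: for `p = 1`, `q = 1 - m ^ 2` it equals `1 - m ^ 2 * sin θ ^ 2`. -/
noncomputable def ellipticRadicand (p q θ : ℝ) : ℝ := p * cos θ ^ 2 + q * sin θ ^ 2

/-- The complete elliptic integral of the first kind in homogeneous form; the classical `K(m)` is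
`ellipticK 1 (1 - m ^ 2)`. -/
noncomputable def ellipticK (p q : ℝ) : ℝ := ∫ θ in 0..(π / 2), (√(ellipticRadicand p q θ))⁻¹

/-- The complete elliptic integral of the second kind in homogeneous form; the classical `E(m)` is
`ellipticE 1 (1 - m ^ 2)`. -/
noncomputable def ellipticE (p q : ℝ) : ℝ := ∫ θ in 0..(π / 2), √(ellipticRadicand p q θ)

/-- The combination `E - q K`, whose derivative in `q` is a multiple of `K` alone. -/
noncomputable def ellipticJ (p q : ℝ) : ℝ := ellipticE p q - q * ellipticK p q

variable {p q : ℝ}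

lemma ellipticRadicand_sub (p q θ : ℝ) : ellipticRadicand p q θ - q = (p - q) * cos θ ^ 2 := by
  rw [ellipticRadicand, sin_sq]; ring

lemma sub_ellipticRadicand (p q θ : ℝ) : p - ellipticRadicand p q θ = (p - q) * sin θ ^ 2 := by
  rw [ellipticRadicand, cos_sq']; ring

lemma ellipticRadicand_mem {s : Set ℝ} (hs : Convex ℝ s) (hp : p ∈ s) (hq : q ∈ s) (θ : ℝ) :
    ellipticRadicand p q θ ∈ s := by
  simpa [ellipticRadicand, mul_comm] using
    hs hp hq (sq_nonneg (cos θ)) (sq_nonneg (sin θ)) (cos_sq_add_sin_sq θ)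

lemma ellipticRadicand_pos (hp : 0 < p) (hq : 0 < q) (θ : ℝ) : 0 < ellipticRadicand p q θ :=
  ellipticRadicand_mem (convex_Ioi 0) hp hq θ

lemma continuous_ellipticRadicand (p q : ℝ) : Continuous (ellipticRadicand p q) := by
  unfold ellipticRadicand; fun_prop

lemma hasDerivAt_ellipticRadicand (p q θ : ℝ) :
    HasDerivAt (ellipticRadicand p q) (-2 * (p - q) * (sin θ * cos θ)) θ := by
  refine ((((hasDerivAt_cos θ).pow 2).const_mul p).add
    (((hasDerivAt_sin θ).pow 2).const_mul q)).congr_deriv ?_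
  push_cast; ring

lemma hasDerivAt_ellipticRadicand_right (p q θ : ℝ) :
    HasDerivAt (fun x => ellipticRadicand p x θ) (sin θ ^ 2) q := by
  simpa [ellipticRadicand] using
    ((hasDerivAt_id q).mul_const (sin θ ^ 2)).const_add (p * cos θ ^ 2)

lemma continuous_comp_ellipticRadicand {f : ℝ → ℝ} (hf : ContinuousOn f (Ioi 0)) (hp : 0 < p)
    (hq : 0 < q) : Continuous fun θ => f (ellipticRadicand p q θ) :=
  hf.comp_continuous (continuous_ellipticRadicand p q) (ellipticRadicand_pos hp hq)

lemma intervalIntegrable_comp_ellipticRadicand {f : ℝ → ℝ} (hf : ContinuousOn f (Ioi 0))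
    (hp : 0 < p) (hq : 0 < q) (a b : ℝ) :
    IntervalIntegrable (fun θ => f (ellipticRadicand p q θ)) MeasureTheory.volume a b :=
  (continuous_comp_ellipticRadicand hf hp hq).intervalIntegrable a b

lemma continuousOn_inv_sqrt : ContinuousOn (fun x : ℝ => (√x)⁻¹) (Ioi 0) :=
  continuous_sqrt.continuousOn.inv₀ fun _ hx => (sqrt_pos.2 hx).ne'

lemma continuousOn_inv_mul_sqrt : ContinuousOn (fun x : ℝ => (x * √x)⁻¹) (Ioi 0) :=
  (by fun_prop : Continuous fun x : ℝ => x * √x).continuousOn.inv₀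
    fun _ hx => (mul_pos hx (sqrt_pos.2 hx)).ne'

lemma hasDerivAt_inv_sqrt {x : ℝ} (hx : 0 < x) :
    HasDerivAt (fun x => (√x)⁻¹) (-(x * √x)⁻¹ / 2) x := by
  refine ((hasDerivAt_sqrt hx.ne').inv (sqrt_pos.2 hx).ne').congr_deriv ?_
  rw [sq_sqrt hx.le]
  field_simp

/-- Integrate the derivative of `(p - q) * sin θ * cos θ * f (ellipticRadicand p q θ)`, which
vanishes at both end points. -/
lemma integral_comp_ellipticRadicand_by_parts {f f' : ℝ → ℝ}
    (hf : ∀ x ∈ Ioi (0 : ℝ), HasDerivAt f (f' x) x) (hf' : ContinuousOn f' (Ioi 0)) (hp : 0 < p)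
    (hq : 0 < q) :
    ∫ θ in 0..(π / 2), ((2 * ellipticRadicand p q θ - p - q) * f (ellipticRadicand p q θ)
      - 2 * ((ellipticRadicand p q θ - q) * (p - ellipticRadicand p q θ))
        * f' (ellipticRadicand p q θ)) = 0 := by
  have hcont := continuous_ellipticRadicand p q
  have hfc := continuous_comp_ellipticRadicand (HasDerivAt.continuousOn hf) hp hq
  have hfc' := continuous_comp_ellipticRadicand hf' hp hq
  have hderiv (θ : ℝ) : HasDerivAt
      (fun θ => (p - q) * (sin θ * cos θ * f (ellipticRadicand p q θ)))
      ((2 * ellipticRadicand p q θ - p - q) * f (ellipticRadicand p q θ)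
        - 2 * ((ellipticRadicand p q θ - q) * (p - ellipticRadicand p q θ))
          * f' (ellipticRadicand p q θ)) θ := by
    refine ((((hasDerivAt_sin θ).mul (hasDerivAt_cos θ)).mul
      ((hf _ (ellipticRadicand_pos hp hq θ)).comp θ
        (hasDerivAt_ellipticRadicand p q θ))).const_mul (p - q)).congr_deriv ?_
    simp only [Pi.mul_apply, Function.comp_apply]
    linear_combination
      (2 * (p - ellipticRadicand p q θ) * f' (ellipticRadicand p q θ)
        - f (ellipticRadicand p q θ)) * ellipticRadicand_sub p q θ
      + (2 * (p - q) * cos θ ^ 2 * f' (ellipticRadicand p q θ)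
        + f (ellipticRadicand p q θ)) * sub_ellipticRadicand p q θ
  rw [intervalIntegral.integral_eq_sub_of_hasDerivAt (fun θ _ => hderiv θ)
    ((Continuous.mul (by fun_prop) hfc).sub
      (Continuous.mul (by fun_prop) hfc') |>.intervalIntegrable _ _)]
  simp

lemma ellipticK_pos (hp : 0 < p) (hq : 0 < q) : 0 < ellipticK p q :=
  intervalIntegral.intervalIntegral_pos_of_pos
    (intervalIntegrable_comp_ellipticRadicand continuousOn_inv_sqrt hp hq _ _)
    (fun θ => inv_pos.2 (sqrt_pos.2 (ellipticRadicand_pos hp hq θ))) (by positivity)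

lemma ellipticE_eq_mul_integral (hp : 0 < p) (hq : 0 < q) :
    ellipticE p q = p * q *
      ∫ θ in 0..(π / 2), (ellipticRadicand p q θ * √(ellipticRadicand p q θ))⁻¹ := by
  have hparts := integral_comp_ellipticRadicand_by_parts
    (fun _ => hasDerivAt_inv_sqrt) (continuousOn_inv_mul_sqrt.neg.div_const 2) hp hq
  have hintegrand (θ : ℝ) :
      (2 * ellipticRadicand p q θ - p - q) * (√(ellipticRadicand p q θ))⁻¹
        - 2 * ((ellipticRadicand p q θ - q) * (p - ellipticRadicand p q θ))
          * (-(ellipticRadicand p q θ * √(ellipticRadicand p q θ))⁻¹ / 2)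
      = √(ellipticRadicand p q θ)
        - p * q * (ellipticRadicand p q θ * √(ellipticRadicand p q θ))⁻¹ := by
    have hR := ellipticRadicand_pos hp hq θ
    field_simp
    rw [sq_sqrt hR.le]
    ring
  simp only [hintegrand] at hparts
  rw [intervalIntegral.integral_sub
    ((continuous_ellipticRadicand p q).sqrt.intervalIntegrable _ _)
    ((intervalIntegrable_comp_ellipticRadicand continuousOn_inv_mul_sqrt hp hq _ _).const_mul _),
    intervalIntegral.integral_const_mul] at hparts
  exact sub_eq_zero.1 hparts

lemma three_mul_integral_ellipticRadicand_mul_sqrt (hp : 0 < p) (hq : 0 < q) :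
    3 * ∫ θ in 0..(π / 2), ellipticRadicand p q θ * √(ellipticRadicand p q θ)
      = 2 * (p + q) * ellipticE p q - p * q * ellipticK p q := by
  have hparts := integral_comp_ellipticRadicand_by_parts
    (fun x hx => hasDerivAt_sqrt (ne_of_gt hx))
    (by simpa [div_eq_mul_inv, mul_comm] using continuousOn_inv_sqrt.div_const 2) hp hq
  have hintegrand (θ : ℝ) :
      (2 * ellipticRadicand p q θ - p - q) * √(ellipticRadicand p q θ)
        - 2 * ((ellipticRadicand p q θ - q) * (p - ellipticRadicand p q θ))
          * (1 / (2 * √(ellipticRadicand p q θ)))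
      = 3 * (ellipticRadicand p q θ * √(ellipticRadicand p q θ))
        - 2 * (p + q) * √(ellipticRadicand p q θ) + p * q * (√(ellipticRadicand p q θ))⁻¹ := by
    have hR := ellipticRadicand_pos hp hq θ
    field_simp
    rw [sq_sqrt hR.le]
    ring
  simp only [hintegrand] at hparts
  have hcont := continuous_ellipticRadicand p q
  have hinv := continuous_comp_ellipticRadicand continuousOn_inv_sqrt hp hq
  rw [intervalIntegral.integral_add (Continuous.intervalIntegrable (by fun_prop) _ _)
      (Continuous.intervalIntegrable (by fun_prop) _ _),
    intervalIntegral.integral_sub (Continuous.intervalIntegrable (by fun_prop) _ _)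
      (Continuous.intervalIntegrable (by fun_prop) _ _)] at hparts
  simp only [intervalIntegral.integral_const_mul] at hparts
  rw [ellipticE, ellipticK]
  linarith

lemma hasDerivAt_integral_comp_ellipticRadicand {f f' : ℝ → ℝ}
    (hf : ∀ x ∈ Ioi (0 : ℝ), HasDerivAt f (f' x) x) (hf' : ContinuousOn f' (Ioi 0)) (hp : 0 < p)
    (hq : 0 < q) :
    HasDerivAt (fun x => ∫ θ in 0..(π / 2), f (ellipticRadicand p x θ))
      (∫ θ in 0..(π / 2), f' (ellipticRadicand p q θ) * sin θ ^ 2) q := by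
  have hfc := HasDerivAt.continuousOn hf
  have hpos : Icc (min p (q / 2)) (max p (2 * q)) ⊆ Ioi 0 := fun x hx =>
    (lt_min hp (half_pos hq)).trans_le hx.1
  have hmem : ∀ θ, ∀ x ∈ Ioo (q / 2) (2 * q),
      ellipticRadicand p x θ ∈ Icc (min p (q / 2)) (max p (2 * q)) := fun θ x hx =>
    ellipticRadicand_mem (convex_Icc _ _) ⟨min_le_left _ _, le_max_left _ _⟩
      ⟨min_le_of_right_le hx.1.le, le_max_of_le_right hx.2.le⟩ θ
  obtain ⟨C, hC⟩ := isCompact_Icc.exists_bound_of_continuousOn (hf'.mono hpos)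
  refine (intervalIntegral.hasDerivAt_integral_of_dominated_loc_of_deriv_le
    (s := Ioo (q / 2) (2 * q)) (F' := fun x θ => f' (ellipticRadicand p x θ) * sin θ ^ 2)
    (bound := fun _ => C) (Ioo_mem_nhds (by linarith) (by linarith)) ?_
    (intervalIntegrable_comp_ellipticRadicand hfc hp hq _ _) ?_ (.of_forall fun θ _ x hx => ?_)
    intervalIntegrable_const (.of_forall fun θ _ x hx => ?_)).2
  · filter_upwards [lt_mem_nhds hq] with x hx using
      (continuous_comp_ellipticRadicand hfc hp hx).aestronglyMeasurable
  · exact ((continuous_comp_ellipticRadicand hf' hp hq).mul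
      (by fun_prop)).aestronglyMeasurable
  · rw [norm_mul, norm_of_nonneg (sq_nonneg (sin θ))]
    exact (mul_le_of_le_one_right (norm_nonneg _) (sin_sq_le_one θ)).trans (hC _ (hmem θ x hx))
  · exact (hf _ (hpos (hmem θ x hx))).comp x (hasDerivAt_ellipticRadicand_right p x θ)

lemma hasDerivAt_ellipticE_integral (hp : 0 < p) (hq : 0 < q) :
    HasDerivAt (ellipticE p)
      (∫ θ in 0..(π / 2), 1 / (2 * √(ellipticRadicand p q θ)) * sin θ ^ 2) q :=
  hasDerivAt_integral_comp_ellipticRadicand (fun x hx => hasDerivAt_sqrt (ne_of_gt hx))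
    (by simpa [div_eq_mul_inv, mul_comm] using continuousOn_inv_sqrt.div_const 2) hp hq

lemma hasDerivAt_ellipticK_integral (hp : 0 < p) (hq : 0 < q) :
    HasDerivAt (ellipticK p) (∫ θ in 0..(π / 2),
      -(ellipticRadicand p q θ * √(ellipticRadicand p q θ))⁻¹ / 2 * sin θ ^ 2) q :=
  hasDerivAt_integral_comp_ellipticRadicand (fun _ => hasDerivAt_inv_sqrt)
    (continuousOn_inv_mul_sqrt.neg.div_const 2) hp hq

lemma hasDerivAt_ellipticE (hp : 0 < p) (hq : 0 < q) (hpq : p ≠ q) :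
    HasDerivAt (ellipticE p) ((p * ellipticK p q - ellipticE p q) / (2 * (p - q))) q := by
  refine (hasDerivAt_ellipticE_integral hp hq).congr_deriv ?_
  have hintegrand (θ : ℝ) : 1 / (2 * √(ellipticRadicand p q θ)) * sin θ ^ 2
      = (2 * (p - q))⁻¹ * (p * (√(ellipticRadicand p q θ))⁻¹ - √(ellipticRadicand p q θ)) := by
    have hR := ellipticRadicand_pos hp hq θ
    field_simp
    rw [sq_sqrt hR.le, sub_ellipticRadicand, mul_comm]
  simp only [hintegrand]
  rw [intervalIntegral.integral_const_mul, intervalIntegral.integral_sub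
    ((intervalIntegrable_comp_ellipticRadicand continuousOn_inv_sqrt hp hq _ _).const_mul p)
    ((continuous_ellipticRadicand p q).sqrt.intervalIntegrable _ _),
    intervalIntegral.integral_const_mul, ← ellipticK, ← ellipticE, inv_mul_eq_div]

lemma hasDerivAt_ellipticK (hp : 0 < p) (hq : 0 < q) (hpq : p ≠ q) :
    HasDerivAt (ellipticK p) (-ellipticJ p q / (2 * q * (p - q))) q := by
  refine (hasDerivAt_ellipticK_integral hp hq).congr_deriv ?_
  have hintegrand (θ : ℝ) :
      -(ellipticRadicand p q θ * √(ellipticRadicand p q θ))⁻¹ / 2 * sin θ ^ 2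
      = (2 * (p - q))⁻¹ * ((√(ellipticRadicand p q θ))⁻¹
        - p * (ellipticRadicand p q θ * √(ellipticRadicand p q θ))⁻¹) := by
    have hR := ellipticRadicand_pos hp hq θ
    field_simp
    linarith [sub_ellipticRadicand p q θ]
  simp only [hintegrand]
  rw [intervalIntegral.integral_const_mul, intervalIntegral.integral_sub
    (intervalIntegrable_comp_ellipticRadicand continuousOn_inv_sqrt hp hq _ _)
    ((intervalIntegrable_comp_ellipticRadicand continuousOn_inv_mul_sqrt hp hq _ _).const_mul p),
    intervalIntegral.integral_const_mul, ← ellipticK, ellipticJ, ellipticE_eq_mul_integral hp hq]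
  field_simp
  ring

lemma hasDerivAt_ellipticJ (hp : 0 < p) (hq : 0 < q) (hpq : p ≠ q) :
    HasDerivAt (ellipticJ p) (-ellipticK p q / 2) q := by
  have hpq' : p - q ≠ 0 := sub_ne_zero.2 hpq
  refine ((hasDerivAt_ellipticE hp hq hpq).sub
    ((hasDerivAt_id q).mul (hasDerivAt_ellipticK hp hq hpq))).congr_deriv ?_
  rw [id, ellipticJ]
  field_simp
  ring

lemma tendsto_mul_ellipticK_zero (hp : 0 < p) :
    Tendsto (fun x => x * ellipticK p x) (𝓝[>] 0) (𝓝 0) := by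
  have hbound {x : ℝ} (hx : 0 < x) (hxp : x ≤ p) : x * ellipticK p x ≤ √x * (π / 2) := by
    have hK : ellipticK p x ≤ ∫ _θ in 0..(π / 2), (√x)⁻¹ := by
      refine intervalIntegral.integral_mono_on (by positivity)
        (intervalIntegrable_comp_ellipticRadicand continuousOn_inv_sqrt hp hx _ _)
        intervalIntegrable_const fun θ _ => ?_
      have hR : x ≤ ellipticRadicand p x θ :=
        ellipticRadicand_mem (convex_Ici x) hxp self_mem_Ici θ
      gcongr
    calc x * ellipticK p x ≤ x * (π / 2 * (√x)⁻¹) := by gcongr; simpa using hK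
      _ = √x * √x * (π / 2 * (√x)⁻¹) := by rw [mul_self_sqrt hx.le]
      _ = √x * (π / 2) := by field_simp
  have hlim : Tendsto (fun x => √x * (π / 2)) (𝓝[>] 0) (𝓝 0) := by
    simpa using ((continuous_sqrt.mul_const (π / 2)).tendsto 0).mono_left nhdsWithin_le_nhds
  refine squeeze_zero' ?_ ?_ hlim
  · filter_upwards [self_mem_nhdsWithin] with x hx using
      mul_nonneg (le_of_lt hx) (ellipticK_pos hp hx).le
  · filter_upwards [Ioc_mem_nhdsGT hp] with x hx using hbound hx.1 hx.2

lemma ellipticE_zero_right (hp : 0 ≤ p) : ellipticE p 0 = √p := by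
  have hcos : EqOn (fun θ => √(ellipticRadicand p 0 θ)) (fun θ => √p * cos θ)
      (uIcc 0 (π / 2)) := by
    intro θ hθ
    rw [uIcc_of_le (by positivity)] at hθ
    have : 0 ≤ cos θ := cos_nonneg_of_mem_Icc ⟨by linarith [hθ.1, pi_pos], hθ.2⟩
    simp [ellipticRadicand, sqrt_mul hp, sqrt_sq this]
  rw [ellipticE, intervalIntegral.integral_congr hcos]
  simp

lemma continuous_ellipticE (p : ℝ) : Continuous (ellipticE p) := by
  refine intervalIntegral.continuous_parametric_intervalIntegral_of_continuous' ?_ _ _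
  unfold Function.uncurry ellipticRadicand
  fun_prop

lemma tendsto_ellipticJ_zero (hp : 0 < p) : Tendsto (ellipticJ p) (𝓝[>] 0) (𝓝 √p) := by
  have hE := ((continuous_ellipticE p).tendsto 0).mono_left (nhdsWithin_le_nhds (s := Ioi 0))
  rw [ellipticE_zero_right hp.le] at hE
  simpa [ellipticJ] using! hE.sub (tendsto_mul_ellipticK_zero hp)

lemma ellipticRadicand_self (p θ : ℝ) : ellipticRadicand p p θ = p := by
  rw [ellipticRadicand, ← mul_add, cos_sq_add_sin_sq, mul_one]

lemma ellipticK_self (p : ℝ) : ellipticK p p = π / 2 * (√p)⁻¹ := by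
  simp [ellipticK, ellipticRadicand_self]

lemma ellipticJ_self (hp : 0 < p) : ellipticJ p p = 0 := by
  have hE : ellipticE p p = π / 2 * √p := by simp [ellipticE, ellipticRadicand_self]
  rw [ellipticJ, hE, ellipticK_self, sub_eq_zero]
  nth_rw 2 [← mul_self_sqrt hp.le]
  field_simp

lemma tendsto_ellipticJ_sub_mul_ellipticK (hp : 0 < p) :
    Tendsto (fun x => ellipticJ p (p - x) * ellipticK p x) (𝓝[>] 0) (𝓝 0) := by
  have hdiff : DifferentiableAt ℝ (fun x => ellipticJ p (p - x)) 0 := by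
    have hJ : DifferentiableAt ℝ (ellipticJ p) (p - 0) := by
      rw [sub_zero]
      exact (hasDerivAt_ellipticE_integral hp hp).differentiableAt.sub
        (differentiableAt_id.mul (hasDerivAt_ellipticK_integral hp hp).differentiableAt)
    exact hJ.comp 0 (by fun_prop)
  have hJO : (fun x => ellipticJ p (p - x)) =O[𝓝[>] 0] fun x => x := by
    simpa [ellipticJ_self hp] using hdiff.isBigO_sub.mono (nhdsWithin_le_nhds (s := Ioi 0))
  exact (hJO.mul (Asymptotics.isBigO_refl (ellipticK p) _)).trans_tendsto
    (tendsto_mul_ellipticK_zero hp)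

lemma hasDerivAt_legendre {x : ℝ} (hx : x ∈ Ioo 0 p) :
    HasDerivAt (fun x => ellipticJ p x * ellipticK p (p - x) + ellipticJ p (p - x) * ellipticK p x)
      0 x := by
  have hx0 : 0 < x := hx.1
  have hxp : 0 < p - x := sub_pos.2 hx.2
  have hp : 0 < p := hx0.trans hx.2
  have hsub : HasDerivAt (fun x => p - x) (-1) x := (hasDerivAt_id x).const_sub p
  have hne : p ≠ p - x := by linarith
  refine (((hasDerivAt_ellipticJ hp hx0 hx.2.ne').mul
      ((hasDerivAt_ellipticK hp hxp hne).comp x hsub)).add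
    (((hasDerivAt_ellipticJ hp hxp hne).comp x hsub).mul
      (hasDerivAt_ellipticK hp hx0 hx.2.ne'))).congr_deriv ?_
  simp only [Function.comp_apply, sub_sub_cancel]
  field_simp
  ring

/-- Legendre's relation `E K' + E' K - K K' = π / 2`, in homogeneous form. -/
theorem ellipticJ_mul_ellipticK_add {w : ℝ} (hw : w ∈ Ioo 0 p) :
    ellipticJ p w * ellipticK p (p - w) + ellipticJ p (p - w) * ellipticK p w = π / 2 := by
  have hp : 0 < p := hw.1.trans hw.2
  set W : ℝ → ℝ := fun x =>
    ellipticJ p x * ellipticK p (p - x) + ellipticJ p (p - x) * ellipticK p x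
  have hconst : ∀ᶠ x in 𝓝[>] 0, W x = W w := by
    filter_upwards [Ioo_mem_nhdsGT hp] with x hx
    exact isOpen_Ioo.is_const_of_deriv_eq_zero isPreconnected_Ioo
      (fun y hy => (hasDerivAt_legendre hy).differentiableAt.differentiableWithinAt)
      (fun y hy => (hasDerivAt_legendre hy).deriv) hx hw
  have hK : Tendsto (fun x => ellipticK p (p - x)) (𝓝[>] 0) (𝓝 (π / 2 * (√p)⁻¹)) := by
    have hsub : Tendsto (fun x => p - x) (𝓝[>] 0) (𝓝 p) := by
      simpa using ((continuous_sub_left p).tendsto 0).mono_left (nhdsWithin_le_nhds (s := Ioi 0))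
    rw [← ellipticK_self]
    exact (hasDerivAt_ellipticK_integral hp hp).continuousAt.tendsto.comp hsub
  have hlim : Tendsto W (𝓝[>] 0) (𝓝 (√p * (π / 2 * (√p)⁻¹) + 0)) :=
    ((tendsto_ellipticJ_zero hp).mul hK).add (tendsto_ellipticJ_sub_mul_ellipticK hp)
  calc W w = √p * (π / 2 * (√p)⁻¹) + 0 :=
        tendsto_nhds_unique (tendsto_const_nhds.congr' (hconst.mono fun _ h => h.symm)) hlim
    _ = π / 2 := by field_simp; ring

lemma integral_sub_mul_sub_mul_inv_sqrt (η : ℝ) (hp : 0 < p) (hq : 0 < q) :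
    ∫ θ in 0..(π / 2), (η - ellipticRadicand p q θ) * (ellipticRadicand p q θ - q)
        * (√(ellipticRadicand p q θ))⁻¹
      = (η - (2 * p - q) / 3) * ellipticJ p q - q * (p - q) / 3 * ellipticK p q := by
  have hexpand (θ : ℝ) : (η - ellipticRadicand p q θ) * (ellipticRadicand p q θ - q)
        * (√(ellipticRadicand p q θ))⁻¹
      = (η + q) * √(ellipticRadicand p q θ) - η * q * (√(ellipticRadicand p q θ))⁻¹
        - ellipticRadicand p q θ * √(ellipticRadicand p q θ) := by
    have hR := ellipticRadicand_pos hp hq θ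
    field_simp
    rw [sq_sqrt hR.le]
    ring
  have hcont := continuous_ellipticRadicand p q
  have hinv := continuous_comp_ellipticRadicand continuousOn_inv_sqrt hp hq
  simp only [hexpand]
  rw [intervalIntegral.integral_sub (Continuous.intervalIntegrable (by fun_prop) _ _)
      (Continuous.intervalIntegrable (by fun_prop) _ _),
    intervalIntegral.integral_sub (Continuous.intervalIntegrable (by fun_prop) _ _)
      (Continuous.intervalIntegrable (by fun_prop) _ _)]
  simp only [intervalIntegral.integral_const_mul]
  rw [← ellipticE, ← ellipticK, ellipticJ]
  linear_combination -(three_mul_integral_ellipticRadicand_mul_sqrt hp hq) / 3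

lemma integral_eq_integral_comp_mul_sin {a α β : ℝ} (g : ℝ → ℝ) (ha : 0 ≤ a) (hα : -(π / 2) ≤ α)
    (hαβ : α ≤ β) (hβ : β ≤ π / 2) :
    ∫ x in (a * sin α)..(a * sin β), g x = ∫ θ in α..β, g (a * sin θ) * (a * cos θ) := by
  refine (intervalIntegral.integral_comp_mul_deriv_of_deriv_nonneg (f := fun θ => a * sin θ)
    (by fun_prop) (fun θ _ => (hasDerivAt_sin θ).const_mul a) fun θ hθ => ?_).symm
  rw [min_eq_left hαβ, max_eq_right hαβ] at hθ
  exact mul_nonneg ha (cos_nonneg_of_mem_Icc ⟨hα.trans hθ.1.le, hθ.2.le.trans hβ⟩)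

lemma cos_pos_and_sin_pos {θ : ℝ} (hθ : θ ∈ Ioo 0 (π / 2)) : 0 < cos θ ∧ 0 < sin θ :=
  ⟨cos_pos_of_mem_Ioo ⟨by linarith [hθ.1, pi_pos], hθ.2⟩,
    sin_pos_of_pos_of_lt_pi hθ.1 (by linarith [hθ.2, pi_pos])⟩

lemma integral_eq_integral_comp_sqrt_ellipticRadicand (g : ℝ → ℝ) (hq : 0 < q) (hqp : q ≤ p) :
    ∫ x in √q..√p, g x = ∫ θ in 0..(π / 2), g (√(ellipticRadicand p q θ))
      * ((p - q) * (sin θ * cos θ) / √(ellipticRadicand p q θ)) := by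
  have hp : 0 < p := hq.trans_le hqp
  have hsubst := intervalIntegral.integral_comp_mul_deriv_of_deriv_nonpos (g := g)
    (continuous_ellipticRadicand p q).sqrt.continuousOn
    (fun θ _ => (hasDerivAt_ellipticRadicand p q θ).sqrt (ellipticRadicand_pos hp hq θ).ne')
    (fun θ hθ => by
      rw [min_eq_left pi_div_two_pos.le, max_eq_right pi_div_two_pos.le] at hθ
      obtain ⟨hcos, hsin⟩ := cos_pos_and_sin_pos hθ
      refine div_nonpos_of_nonpos_of_nonneg ?_ (by positivity)
      nlinarith [mul_nonneg (sub_nonneg.2 hqp) (mul_pos hsin hcos).le])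
  have hzero : ellipticRadicand p q 0 = p := by simp [ellipticRadicand]
  have hpi : ellipticRadicand p q (π / 2) = q := by simp [ellipticRadicand]
  rw [hzero, hpi] at hsubst
  rw [intervalIntegral.integral_symm, ← hsubst, ← intervalIntegral.integral_neg]
  congr 1 with θ
  rw [Function.comp_apply]
  ring

section Modulus

variable {c a : ℝ}

lemma sq_sub_mul_sin_sq (c a θ : ℝ) :
    c ^ 2 - (a * sin θ) ^ 2 = ellipticRadicand (c ^ 2) (c ^ 2 - a ^ 2) θ := by
  linear_combination sub_ellipticRadicand (c ^ 2) (c ^ 2 - a ^ 2) θ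

lemma integral_inv_sqrt_legendre_form (ha : 0 < a) (hac : a < c) :
    ∫ t in (0 : ℝ)..1, (√((1 - t ^ 2) * (1 - (a / c) ^ 2 * t ^ 2)))⁻¹
      = c * ellipticK (c ^ 2) (c ^ 2 - a ^ 2) := by
  have hc : 0 < c := ha.trans hac
  have hsubst := integral_eq_integral_comp_mul_sin
    (fun t => (√((1 - t ^ 2) * (1 - (a / c) ^ 2 * t ^ 2)))⁻¹) zero_le_one
    (neg_nonpos.2 pi_div_two_pos.le) pi_div_two_pos.le le_rfl
  simp only [sin_zero, mul_zero, sin_pi_div_two, mul_one, one_mul] at hsubst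
  rw [hsubst, ellipticK, ← intervalIntegral.integral_const_mul]
  refine intervalIntegral.integral_congr_Ioo_of_le pi_div_two_pos.le fun θ hθ => ?_
  have hcos := (cos_pos_and_sin_pos hθ).1
  have hR : ellipticRadicand (c ^ 2) (c ^ 2 - a ^ 2) θ
      = c ^ 2 * (1 - (a / c) ^ 2 * sin θ ^ 2) := by
    rw [← sq_sub_mul_sin_sq]; field_simp
  rw [← cos_sq', hR, sqrt_mul (sq_nonneg _), sqrt_mul (sq_nonneg _), sqrt_sq hcos.le, sqrt_sq hc.le]
  field_simp

lemma integral_inv_sqrt_symm (ha : 0 < a) (hac : a < c) :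
    ∫ s in (-a)..a, (√((c ^ 2 - s ^ 2) * (a ^ 2 - s ^ 2)))⁻¹
      = 2 * ellipticK (c ^ 2) (c ^ 2 - a ^ 2) := by
  have hp : 0 < c ^ 2 := pow_pos (ha.trans hac) 2
  have hq : 0 < c ^ 2 - a ^ 2 := sub_pos.2 (pow_lt_pow_left₀ hac ha.le two_ne_zero)
  have hle : -(π / 2) ≤ π / 2 := by linarith [pi_pos]
  have hint := intervalIntegrable_comp_ellipticRadicand continuousOn_inv_sqrt hp hq
  have hhalf : ∫ θ in (-(π / 2))..0, (√(ellipticRadicand (c ^ 2) (c ^ 2 - a ^ 2) θ))⁻¹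
      = ellipticK (c ^ 2) (c ^ 2 - a ^ 2) := by
    rw [ellipticK, ← neg_zero, ← intervalIntegral.integral_comp_neg]
    simp [ellipticRadicand]
  have hsubst := integral_eq_integral_comp_mul_sin
    (fun s => (√((c ^ 2 - s ^ 2) * (a ^ 2 - s ^ 2)))⁻¹) ha.le le_rfl hle le_rfl
  simp only [sin_neg, sin_pi_div_two, mul_neg, mul_one] at hsubst
  calc ∫ s in (-a)..a, (√((c ^ 2 - s ^ 2) * (a ^ 2 - s ^ 2)))⁻¹
      = ∫ θ in (-(π / 2))..(π / 2), (√(ellipticRadicand (c ^ 2) (c ^ 2 - a ^ 2) θ))⁻¹ := by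
        rw [hsubst]
        refine intervalIntegral.integral_congr_Ioo_of_le hle fun θ hθ => ?_
        have hcos := mul_pos ha (cos_pos_of_mem_Ioo hθ)
        have hR := ellipticRadicand_pos hp hq θ
        have hcos_sq : a ^ 2 - (a * sin θ) ^ 2 = (a * cos θ) ^ 2 := by
          rw [mul_pow, mul_pow, cos_sq']; ring
        rw [hcos_sq, sq_sub_mul_sin_sq, sqrt_mul hR.le, sqrt_sq hcos.le, mul_inv,
          inv_mul_cancel_right₀ hcos.ne']
    _ = 2 * ellipticK (c ^ 2) (c ^ 2 - a ^ 2) := by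
        rw [← intervalIntegral.integral_add_adjacent_intervals (hint _ 0) (hint _ _), hhalf,
          ← ellipticK, two_mul]

/-- The left-hand side of the normalization condition `N(a, ξ) = 0`. -/
noncomputable def normalizationIntegral (c a ξ : ℝ) : ℝ :=
  ∫ s in (0 : ℝ)..a, (ξ + (c ^ 2 - a ^ 2) / 2 - s ^ 2) * √((a ^ 2 - s ^ 2) / (c ^ 2 - s ^ 2))

/-- The integral defining the phase, without its factor: `B(ξ) = 24 * phaseIntegral c (a ξ) ξ`. -/
noncomputable def phaseIntegral (c a ξ : ℝ) : ℝ :=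
  ∫ s in a..c, (ξ + (c ^ 2 - a ^ 2) / 2 - s ^ 2) * √((s ^ 2 - a ^ 2) / (c ^ 2 - s ^ 2))

lemma normalizationIntegral_eq (ha : 0 < a) (hac : a < c) (ξ : ℝ) :
    normalizationIntegral c a ξ
      = (ξ - (c ^ 2 + a ^ 2) / 6) * ellipticJ (c ^ 2) (c ^ 2 - a ^ 2)
        + a ^ 2 * (c ^ 2 - a ^ 2) / 3 * ellipticK (c ^ 2) (c ^ 2 - a ^ 2) := by
  set p := c ^ 2
  set q := p - a ^ 2
  set η := ξ + q / 2
  have hp : 0 < p := pow_pos (ha.trans hac) 2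
  have hq : 0 < q := sub_pos.2 (pow_lt_pow_left₀ hac ha.le two_ne_zero)
  have hsubst := integral_eq_integral_comp_mul_sin
    (fun s => (η - s ^ 2) * √((a ^ 2 - s ^ 2) / (p - s ^ 2))) ha.le
    (neg_nonpos.2 pi_div_two_pos.le) pi_div_two_pos.le le_rfl
  simp only [sin_zero, mul_zero, sin_pi_div_two, mul_one] at hsubst
  have hintegrand : EqOn
      (fun θ => (η - (a * sin θ) ^ 2) * √((a ^ 2 - (a * sin θ) ^ 2) / (p - (a * sin θ) ^ 2))
        * (a * cos θ))
      (fun θ => -((p - η - ellipticRadicand p q θ) * (ellipticRadicand p q θ - q)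
        * (√(ellipticRadicand p q θ))⁻¹)) (Ioo 0 (π / 2)) := by
    intro θ hθ
    have hcos := mul_pos ha (cos_pos_and_sin_pos hθ).1
    have hR : p - (a * sin θ) ^ 2 = ellipticRadicand p q θ := sq_sub_mul_sin_sq c a θ
    have hcos_sq : ellipticRadicand p q θ - q = (a * cos θ) ^ 2 := by
      rw [ellipticRadicand_sub, mul_pow, sub_sub_cancel]
    have hcos_sq' : a ^ 2 - (a * sin θ) ^ 2 = (a * cos θ) ^ 2 := by
      rw [← hcos_sq, ← hR]; ring
    dsimp only
    rw [hcos_sq', hR, sqrt_div (sq_nonneg _), sqrt_sq hcos.le, hcos_sq, ← hR]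
    ring
  rw [normalizationIntegral, hsubst,
    intervalIntegral.integral_congr_Ioo_of_le pi_div_two_pos.le hintegrand,
    intervalIntegral.integral_neg, integral_sub_mul_sub_mul_inv_sqrt _ hp hq]
  ring

lemma phaseIntegral_eq (ha : 0 < a) (hac : a < c) (ξ : ℝ) :
    phaseIntegral c a ξ
      = (ξ - (c ^ 2 + a ^ 2) / 6) * ellipticJ (c ^ 2) (a ^ 2)
        - a ^ 2 * (c ^ 2 - a ^ 2) / 3 * ellipticK (c ^ 2) (a ^ 2) := by
  have hc : 0 < c := ha.trans hac
  set p := c ^ 2 with hp_def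
  set q := a ^ 2 with hq_def
  set η := ξ + (p - q) / 2 with hη
  have hp : 0 < p := pow_pos hc 2
  have hq : 0 < q := pow_pos ha 2
  have hqp : q < p := pow_lt_pow_left₀ hac ha.le two_ne_zero
  have hpq : 0 < p - q := sub_pos.2 hqp
  have hsubst := integral_eq_integral_comp_sqrt_ellipticRadicand
    (fun s => (η - s ^ 2) * √((s ^ 2 - q) / (p - s ^ 2))) hq hqp.le
  rw [hp_def, hq_def, sqrt_sq hc.le, sqrt_sq ha.le, ← hp_def, ← hq_def] at hsubst
  have hintegrand : EqOn
      (fun θ => (η - √(ellipticRadicand p q θ) ^ 2)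
        * √((√(ellipticRadicand p q θ) ^ 2 - q) / (p - √(ellipticRadicand p q θ) ^ 2))
        * ((p - q) * (sin θ * cos θ) / √(ellipticRadicand p q θ)))
      (fun θ => (η - ellipticRadicand p q θ) * (ellipticRadicand p q θ - q)
        * (√(ellipticRadicand p q θ))⁻¹) (Ioo 0 (π / 2)) := by
    intro θ hθ
    obtain ⟨hcos, hsin⟩ := cos_pos_and_sin_pos hθ
    have hR := ellipticRadicand_pos hp hq θ
    have hcot : √((ellipticRadicand p q θ - q) / (p - ellipticRadicand p q θ))
        = cos θ / sin θ := by
      rw [ellipticRadicand_sub, sub_ellipticRadicand, mul_div_mul_left _ _ hpq.ne', ← div_pow,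
        sqrt_sq (by positivity)]
    simp only [sq_sqrt hR.le]
    rw [hcot, ellipticRadicand_sub]
    field_simp
  rw [phaseIntegral, hsubst,
    intervalIntegral.integral_congr_Ioo_of_le pi_div_two_pos.le hintegrand,
    integral_sub_mul_sub_mul_inv_sqrt _ hp hq, hη]
  ring

end Modulus

section Derivatives

variable {w : ℝ → ℝ} {w' ξ : ℝ}

lemma hasDerivAt_normalization_closed_form (hw : HasDerivAt w w' ξ) (hmem : w ξ ∈ Ioo 0 p) :
    HasDerivAt (fun t => (t - (p + w t) / 6) * ellipticJ p (p - w t)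
        + w t * (p - w t) / 3 * ellipticK p (p - w t))
      (ellipticJ p (p - w ξ) + w' / 2 * (ξ + p / 2 - 3 / 2 * w ξ) * ellipticK p (p - w ξ)) ξ := by
  have hw0 : 0 < w ξ := hmem.1
  have hq : 0 < p - w ξ := sub_pos.2 hmem.2
  have hp : 0 < p := hw0.trans hmem.2
  have hne : p ≠ p - w ξ := by linarith
  have hsub := hw.const_sub p
  refine ((((hasDerivAt_id ξ).sub ((hw.const_add p).div_const 6)).mul
      ((hasDerivAt_ellipticJ hp hq hne).comp ξ hsub)).add
    (((hw.mul hsub).div_const 3).mul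
      ((hasDerivAt_ellipticK hp hq hne).comp ξ hsub))).congr_deriv ?_
  simp only [Function.comp_apply, Pi.sub_apply, Pi.mul_apply, id, sub_sub_cancel]
  field_simp
  ring

lemma hasDerivAt_phase_closed_form (hw : HasDerivAt w w' ξ) (hmem : w ξ ∈ Ioo 0 p) :
    HasDerivAt (fun t => (t - (p + w t) / 6) * ellipticJ p (w t)
        - w t * (p - w t) / 3 * ellipticK p (w t))
      (ellipticJ p (w ξ) - w' / 2 * (ξ + p / 2 - 3 / 2 * w ξ) * ellipticK p (w ξ)) ξ := by
  have hw0 : 0 < w ξ := hmem.1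
  have hq : 0 < p - w ξ := sub_pos.2 hmem.2
  have hp : 0 < p := hw0.trans hmem.2
  refine ((((hasDerivAt_id ξ).sub ((hw.const_add p).div_const 6)).mul
      ((hasDerivAt_ellipticJ hp hw0 hmem.2.ne').comp ξ hw)).sub
    (((hw.mul (hw.const_sub p)).div_const 3).mul
      ((hasDerivAt_ellipticK hp hw0 hmem.2.ne').comp ξ hw))).congr_deriv ?_
  simp only [Function.comp_apply, Pi.sub_apply, Pi.mul_apply, id]
  field_simp
  ring

end Derivatives

theorem hasDerivAt_phaseIntegral {c ξ : ℝ} {a : ℝ → ℝ} (ha : DifferentiableAt ℝ a ξ)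
    (hrange : ∀ᶠ t in 𝓝 ξ, 0 < a t ∧ a t < c)
    (hnorm : ∀ᶠ t in 𝓝 ξ, normalizationIntegral c (a t) t = 0) :
    HasDerivAt (fun t => phaseIntegral c (a t) t)
      (π / (2 * ellipticK (c ^ 2) (c ^ 2 - a ξ ^ 2))) ξ := by
  obtain ⟨ha0, hac⟩ := hrange.self_of_nhds
  have hw : HasDerivAt (fun t => a t ^ 2) (deriv (fun t => a t ^ 2) ξ) ξ :=
    (ha.pow 2).hasDerivAt
  have hmem : a ξ ^ 2 ∈ Ioo 0 (c ^ 2) :=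
    ⟨pow_pos ha0 2, pow_lt_pow_left₀ hac ha0.le two_ne_zero⟩
  have hnorm' := (hasDerivAt_normalization_closed_form hw hmem).unique
    ((hasDerivAt_const ξ (0 : ℝ)).congr_of_eventuallyEq (by
      filter_upwards [hrange, hnorm] with t ht hNt
      rw [← normalizationIntegral_eq ht.1 ht.2, hNt]))
  refine ((hasDerivAt_phase_closed_form hw hmem).congr_of_eventuallyEq
    (hrange.mono fun t ht => phaseIntegral_eq ht.1 ht.2 t)).congr_deriv ?_
  have hK := ellipticK_pos (hmem.1.trans hmem.2) (sub_pos.2 hmem.2)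
  rw [eq_div_iff (by positivity)]
  linear_combination 2 * ellipticJ_mul_ellipticK_add hmem
    - 2 * ellipticK (c ^ 2) (a ξ ^ 2) * hnorm'

end EllipticIntegrals

/-- identity (3.1) of Lemma 3.2: `(Γ(ξ)/(6π))·B′(ξ) = −c²/(2K(m(ξ))²)`,
where `B` is the phase (1.9), `Γ` the constant (1.10) and `m(ξ) = a(ξ)/c`. -/
theorem theta_coefficient_identity (c : ℝ) (hc : 0 < c) (a : ℝ → ℝ)
    (hrange : ∀ ξ ∈ Set.Ioo (-c ^ 2 / 2) (c ^ 2 / 3), 0 < a ξ ∧ a ξ < c)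
    (hdiff : ∀ ξ ∈ Set.Ioo (-c ^ 2 / 2) (c ^ 2 / 3), DifferentiableAt ℝ a ξ)
    (hnorm : ∀ ξ ∈ Set.Ioo (-c ^ 2 / 2) (c ^ 2 / 3),
      ∫ s in (0:ℝ)..(a ξ),
        (ξ + (c ^ 2 - (a ξ) ^ 2) / 2 - s ^ 2) *
          Real.sqrt (((a ξ) ^ 2 - s ^ 2) / (c ^ 2 - s ^ 2)) = 0) :
    ∀ ξ ∈ Set.Ioo (-c ^ 2 / 2) (c ^ 2 / 3),
      (-(1 / 2) * (∫ s in (-(a ξ))..(a ξ),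
            (Real.sqrt ((c ^ 2 - s ^ 2) * ((a ξ) ^ 2 - s ^ 2)))⁻¹)⁻¹) / (6 * Real.pi) *
        deriv (fun t => 24 * ∫ s in (a t)..c,
          (t + (c ^ 2 - (a t) ^ 2) / 2 - s ^ 2) *
            Real.sqrt ((s ^ 2 - (a t) ^ 2) / (c ^ 2 - s ^ 2))) ξ =
      -c ^ 2 /
        (2 * (∫ t in (0:ℝ)..1, (Real.sqrt ((1 - t ^ 2) * (1 - (a ξ / c) ^ 2 * t ^ 2)))⁻¹) ^ 2) := by
  intro ξ hξ
  obtain ⟨ha, hac⟩ := hrange ξ hξ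
  have hnhds := isOpen_Ioo.mem_nhds hξ
  have hphase := (hasDerivAt_phaseIntegral (hdiff ξ hξ) (Filter.eventually_of_mem hnhds hrange)
    (Filter.eventually_of_mem hnhds hnorm)).const_mul 24
  rw [integral_inv_sqrt_symm ha hac, integral_inv_sqrt_legendre_form ha hac]
  simp only [phaseIntegral] at hphase
  rw [hphase.deriv]
  field_simp
  norm_num
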